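/- arXiv:1609.08740 — 3 statements merged into one kernel-verified Lean document; each statement's English description precedes it below -/
import Mathlib

section
/- Let n be a positive integer, let Q0 be a real symmetric (n+1)×(n+1) matrix with zero diagonal, and suppose there exist λ ∈ ℝ and a real (n+1)×(n+1) matrix V such that Q0 + λI = Vᵀ V; let v_i denote the i-th column of V, and set K = ⌊(n+1)/2⌋ + 1. Then a vector c* ∈ {0,1}^n with Σ_{i=1}^n c*_i = ⌊(n+1)/2⌋ maximizes c̃ᵀ Q0 c̃ (where c̃ = (c,1) ∈ ℝ^{n+1}) over all such vectors c if and only if the subset V1* = {i ≤ n : c*_i = 1} ∪ {n+1} minimizes the clustering cost f(V1) = Σ_{i∈V1} ‖v_i − (1/K) Σ_{j∈V1} v_j‖² over all subsets V1 ⊆ {1,…,n+1} with |V1| = K and n+1 ∈ V1. -/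
open Matrix Finset

/-!
For a set `S` of `K` columns, expanding the squares gives
`f(S) = ∑_{i ∈ S} ‖v_i‖² - (1/K) ‖∑_{j ∈ S} v_j‖²`. Since the Gram matrix of the columns is
`Q0 + λ I` and `Q0` has zero diagonal, every `‖v_i‖²` equals `λ`, and
`‖∑_{j ∈ S} v_j‖² = q(S) + K λ` with `q(S) = ∑_{i, j ∈ S} Q0 i j`. Hence
`f(S) = (K - 1) λ - q(S) / K` (`clustering_cost_eq`), a strictly decreasing function of `q(S)`.
Vectors `(c, 1)` with `c` binary are the indicators of sets `S` containing the last index, with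
quadratic form `q(S)` (`quad_form_eq`) and `|S| = ∑ c + 1` (`card_eq_sum_add_one`), so maximizing
the quadratic form and minimizing `f` are the same problem.
-/

/-- On `K`-element sets of columns, the clustering cost is an affine function, with slope `-1/K`,
of the sum of the entries of `Q0` over the set. -/
lemma clustering_cost_eq {m : Type*} [Fintype m] [DecidableEq m] (Q0 V : Matrix m m ℝ)
    (hdiag : ∀ i, Q0 i i = 0) (lam : ℝ)
    (hV : Q0 + lam • (1 : Matrix m m ℝ) = Vᵀ * V)
    (K : ℕ) (hK : 0 < K) (S : Finset m) (hS : S.card = K) :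
    ∑ i ∈ S, ∑ k, (V k i - (1 / (K : ℝ)) * ∑ j ∈ S, V k j) ^ 2 =
      ((K : ℝ) - 1) * lam - (1 / (K : ℝ)) * ∑ i ∈ S, ∑ j ∈ S, Q0 i j := by
  have hgram : ∀ i j, ∑ k, V k i * V k j = Q0 i j + if i = j then lam else 0 := by
    intro i j
    have h := congrFun (congrFun hV i) j
    simp only [Matrix.add_apply, Matrix.smul_apply, Matrix.one_apply, Matrix.mul_apply,
      Matrix.transpose_apply, smul_eq_mul, mul_ite, mul_one, mul_zero] at h
    exact h.symm
  have hK0 : (K : ℝ) ≠ 0 := by positivity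
  have hsq : ∑ k, ∑ i ∈ S, V k i ^ 2 = K * lam := by
    rw [Finset.sum_comm]
    have : ∀ i ∈ S, ∑ k, V k i ^ 2 = lam := by
      intro i _
      have h := hgram i i
      simp only [hdiag, if_true, zero_add] at h
      simpa only [sq] using h
    rw [Finset.sum_congr rfl this]
    simp [hS]
  have hcent : ∑ k, (∑ j ∈ S, V k j) ^ 2 = ∑ i ∈ S, ∑ j ∈ S, Q0 i j + K * lam := by
    simp only [sq, Finset.sum_mul_sum]
    rw [Finset.sum_comm]
    have : ∀ i ∈ S, ∑ k, ∑ j ∈ S, V k i * V k j = ∑ j ∈ S, Q0 i j + lam := by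
      intro i hi
      rw [Finset.sum_comm]
      simp only [hgram, Finset.sum_add_distrib, Finset.sum_ite_eq, hi, if_true]
    rw [Finset.sum_congr rfl this, Finset.sum_add_distrib]
    simp [hS]
  have hrow : ∀ k, ∑ i ∈ S, (V k i - (1 / (K : ℝ)) * ∑ j ∈ S, V k j) ^ 2 =
      ∑ i ∈ S, V k i ^ 2 - (1 / (K : ℝ)) * (∑ j ∈ S, V k j) ^ 2 := by
    intro k
    simp only [sub_sq, Finset.sum_add_distrib, Finset.sum_sub_distrib, ← Finset.sum_mul,
      ← Finset.mul_sum, Finset.sum_const, hS, nsmul_eq_mul]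
    field_simp
    ring
  rw [Finset.sum_comm]
  simp only [hrow]
  rw [Finset.sum_sub_distrib, ← Finset.mul_sum, hsq, hcent]
  field_simp
  ring

lemma snoc_eq_indicator {n : ℕ} (c : Fin n → ℝ) (hc : ∀ i, c i = 0 ∨ c i = 1)
    (S : Finset (Fin (n + 1))) (hS : ∀ i, i ∈ S ↔ (Fin.snoc c 1 : Fin (n + 1) → ℝ) i = 1)
    (i : Fin (n + 1)) : (Fin.snoc c 1 : Fin (n + 1) → ℝ) i = if i ∈ S then 1 else 0 := by
  split_ifs with h
  · exact (hS i).1 h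
  · rw [hS] at h
    induction i using Fin.lastCases with
    | last => simp at h
    | cast i =>
      simp only [Fin.snoc_castSucc] at h ⊢
      exact (hc i).resolve_right h

lemma quad_form_eq {n : ℕ} (Q0 : Matrix (Fin (n + 1)) (Fin (n + 1)) ℝ)
    (c : Fin n → ℝ) (hc : ∀ i, c i = 0 ∨ c i = 1)
    (S : Finset (Fin (n + 1))) (hS : ∀ i, i ∈ S ↔ (Fin.snoc c 1 : Fin (n + 1) → ℝ) i = 1) :
    ∑ i, ∑ j, (Fin.snoc c 1 : Fin (n + 1) → ℝ) i * Q0 i j * (Fin.snoc c 1 : Fin (n + 1) → ℝ) j =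
      ∑ i ∈ S, ∑ j ∈ S, Q0 i j := by
  simp only [snoc_eq_indicator c hc S hS, ite_mul, mul_ite, one_mul, zero_mul, mul_one, mul_zero]
  simp

lemma card_eq_sum_add_one {n : ℕ} (c : Fin n → ℝ) (hc : ∀ i, c i = 0 ∨ c i = 1)
    (S : Finset (Fin (n + 1))) (hS : ∀ i, i ∈ S ↔ (Fin.snoc c 1 : Fin (n + 1) → ℝ) i = 1) :
    (S.card : ℝ) = ∑ i, c i + 1 := by
  have h : ∑ i, (Fin.snoc c 1 : Fin (n + 1) → ℝ) i = S.card := by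
    simp [snoc_eq_indicator c hc S hS]
  rw [← h, Fin.sum_univ_castSucc]
  simp

/-- Equivalence of the constrained binary quadratic program and the clustering problem
(Theorem 1 of the paper): with Q0 + λI = Vᵀ V, a feasible c* ∈ {0,1}^n
(with Σ c*_i = ⌊(n+1)/2⌋) maximizes c̃ᵀ Q0 c̃ over all feasible c if and only if the
subset V1* = {i ≤ n : c*_i = 1} ∪ {n+1} minimizes the clustering cost over all
subsets V1 ⊆ {1,…,n+1} of size K = ⌊(n+1)/2⌋ + 1 containing the index n+1. -/
theorem bqp_equiv_clustering (n : ℕ) (hn : 0 < n)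
    (Q0 : Matrix (Fin (n + 1)) (Fin (n + 1)) ℝ)
    (hsymm : Q0.IsSymm) (hdiag : ∀ i, Q0 i i = 0)
    (lam : ℝ) (V : Matrix (Fin (n + 1)) (Fin (n + 1)) ℝ)
    (hV : Q0 + lam • (1 : Matrix (Fin (n + 1)) (Fin (n + 1)) ℝ) = Vᵀ * V)
    (K : ℕ) (hK : K = (n + 1) / 2 + 1)
    (c : Fin n → ℝ) (hc01 : ∀ i, c i = 0 ∨ c i = 1)
    (hcsum : ∑ i, c i = (((n + 1) / 2 : ℕ) : ℝ))
    (V1star : Finset (Fin (n + 1)))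
    (hV1star : ∀ i, i ∈ V1star ↔ (Fin.snoc c 1 : Fin (n+1) → ℝ) i = 1) :
    (∀ c' : Fin n → ℝ, (∀ i, c' i = 0 ∨ c' i = 1) →
        ∑ i, c' i = (((n + 1) / 2 : ℕ) : ℝ) →
        ∑ i, ∑ j, (Fin.snoc c' 1 : Fin (n+1) → ℝ) i * Q0 i j * (Fin.snoc c' 1 : Fin (n+1) → ℝ) j ≤
          ∑ i, ∑ j, (Fin.snoc c 1 : Fin (n+1) → ℝ) i * Q0 i j * (Fin.snoc c 1 : Fin (n+1) → ℝ) j) ↔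
    (∀ V1 : Finset (Fin (n + 1)), V1.card = K → Fin.last n ∈ V1 →
        ∑ i ∈ V1star, ∑ k, (V k i - (1 / (K : ℝ)) * ∑ j ∈ V1star, V k j) ^ 2 ≤
          ∑ i ∈ V1, ∑ k, (V k i - (1 / (K : ℝ)) * ∑ j ∈ V1, V k j) ^ 2) := by
  have hKpos : 0 < K := by omega
  have hKr : (K : ℝ) = (((n + 1) / 2 : ℕ) : ℝ) + 1 := by rw [hK]; push_cast; ring
  have hcard : V1star.card = K := by
    have h := card_eq_sum_add_one c hc01 V1star hV1star
    rw [hcsum, ← hKr] at h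
    exact_mod_cast h
  have hinv : 0 < 1 / (K : ℝ) := by positivity
  -- Both optimality conditions compare `q(V1star)` with `q(V1)`, in opposite directions.
  have hcost : ∀ V1 : Finset (Fin (n + 1)), V1.card = K →
      (∑ i ∈ V1star, ∑ k, (V k i - (1 / (K : ℝ)) * ∑ j ∈ V1star, V k j) ^ 2 ≤
          ∑ i ∈ V1, ∑ k, (V k i - (1 / (K : ℝ)) * ∑ j ∈ V1, V k j) ^ 2 ↔
        ∑ i ∈ V1, ∑ j ∈ V1, Q0 i j ≤ ∑ i ∈ V1star, ∑ j ∈ V1star, Q0 i j) := by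
    intro V1 h1
    rw [clustering_cost_eq Q0 V hdiag lam hV K hKpos V1star hcard,
      clustering_cost_eq Q0 V hdiag lam hV K hKpos V1 h1, sub_le_sub_iff_left,
      mul_le_mul_iff_right₀ hinv]
  rw [quad_form_eq Q0 c hc01 V1star hV1star]
  constructor
  · intro hmax V1 h1 hlast
    rw [hcost V1 h1]
    let c' : Fin n → ℝ := fun i => if i.castSucc ∈ V1 then 1 else 0
    have hc' : ∀ i, c' i = 0 ∨ c' i = 1 := by
      intro i
      by_cases h : i.castSucc ∈ V1 <;> simp [c', h]
    have hmem : ∀ i, i ∈ V1 ↔ (Fin.snoc c' 1 : Fin (n + 1) → ℝ) i = 1 := by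
      intro i
      induction i using Fin.lastCases with
      | last => simp [hlast]
      | cast i => simp [c']
    have hsum : ∑ i, c' i = (((n + 1) / 2 : ℕ) : ℝ) := by
      have h := card_eq_sum_add_one c' hc' V1 hmem
      rw [h1] at h
      linarith
    rw [← quad_form_eq Q0 c' hc' V1 hmem]
    exact hmax c' hc' hsum
  · intro hmin c' hc' hsum
    let S : Finset (Fin (n + 1)) :=
      Finset.univ.filter fun i => (Fin.snoc c' 1 : Fin (n + 1) → ℝ) i = 1
    have hmem : ∀ i, i ∈ S ↔ (Fin.snoc c' 1 : Fin (n + 1) → ℝ) i = 1 := by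
      intro i
      simp [S]
    have hS : S.card = K := by
      have h := card_eq_sum_add_one c' hc' S hmem
      rw [hsum, ← hKr] at h
      exact_mod_cast h
    rw [quad_form_eq Q0 c' hc' S hmem]
    exact (hcost S hS).1 (hmin S hS ((hmem _).2 (by simp)))
end

section
/- Let n be a positive integer, let Q0 be a real symmetric (n+1)×(n+1) matrix with zero diagonal, and suppose there exist λ ∈ ℝ and a real (n+1)×(n+1) matrix V such that Q0 + λI = Vᵀ V; let v_i denote the i-th column of V and set K = ⌊(n+1)/2⌋ + 1. Then for every subset V1 ⊆ {1,…,n+1} with |V1| = K and n+1 ∈ V1, writing c̃ ∈ {0,1}^{n+1} for the indicator vector of V1, the clustering cost satisfies Σ_{i∈V1} ‖v_i − (1/K) Σ_{j∈V1} v_j‖² = (K−1)λ − (1/K) · c̃ᵀ Q0 c̃. -/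
open Matrix Finset

/-!
Expanding the squares coordinatewise, the cost is `∑ ‖v_i‖² - (1/K) ‖∑ v_i‖²`, the sums being
over `V1`. The entries of the Gram matrix `Vᵀ V = Q0 + λ I` give `‖v_i‖² = λ`, because `Q0` has
zero diagonal, and `‖∑ v_i‖² = c̃ᵀ Q0 c̃ + K λ`; substituting yields `(K - 1) λ - (1/K) c̃ᵀ Q0 c̃`.
-/

/-- Variance decomposition of one coordinate around the mean of its values on `s`. -/
lemma sum_sub_mean_sq {ι : Type*} (s : Finset ι) (f : ι → ℝ) (hs : (s.card : ℝ) ≠ 0) :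
    ∑ i ∈ s, (f i - (1 / (s.card : ℝ)) * ∑ j ∈ s, f j) ^ 2 =
      ∑ i ∈ s, f i * f i - (1 / (s.card : ℝ)) * ∑ i ∈ s, ∑ j ∈ s, f i * f j := by
  rw [← Finset.sum_mul_sum]
  simp only [sub_sq, Finset.sum_add_distrib, Finset.sum_sub_distrib, Finset.sum_const,
    nsmul_eq_mul, ← Finset.sum_mul, ← Finset.mul_sum, ← pow_two]
  field_simp
  ring

/-- Clustering cost in terms of the BQP objective: with Q0 + λI = Vᵀ V, for every
subset V1 of {1,…,n+1} of size K = ⌊(n+1)/2⌋ + 1 containing the index n+1,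
the clustering cost of the columns of V indexed by V1 equals
(K−1)λ − (1/K)·c̃ᵀ Q0 c̃, where c̃ is the indicator vector of V1. -/
theorem clustering_cost_eq_bqp (n : ℕ) (hn : 0 < n)
    (Q0 : Matrix (Fin (n + 1)) (Fin (n + 1)) ℝ)
    (hsymm : Q0.IsSymm) (hdiag : ∀ i, Q0 i i = 0)
    (lam : ℝ) (V : Matrix (Fin (n + 1)) (Fin (n + 1)) ℝ)
    (hV : Q0 + lam • (1 : Matrix (Fin (n + 1)) (Fin (n + 1)) ℝ) = Vᵀ * V)
    (K : ℕ) (hK : K = (n + 1) / 2 + 1)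
    (V1 : Finset (Fin (n + 1))) (hcard : V1.card = K) (hlast : Fin.last n ∈ V1)
    (ctilde : Fin (n + 1) → ℝ)
    (hctilde : ∀ i, ctilde i = if i ∈ V1 then 1 else 0) :
    ∑ i ∈ V1, ∑ k, (V k i - (1 / (K : ℝ)) * ∑ j ∈ V1, V k j) ^ 2 =
      ((K : ℝ) - 1) * lam -
        (1 / (K : ℝ)) * ∑ i, ∑ j, ctilde i * Q0 i j * ctilde j := by
  have hK0 : (V1.card : ℝ) ≠ 0 := by
    exact_mod_cast (Finset.card_pos.mpr ⟨_, hlast⟩).ne'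
  have hG : ∀ i j, ∑ k, V k i * V k j = Q0 i j + if i = j then lam else 0 := by
    intro i j
    have h := congrFun (congrFun hV i) j
    simp only [Matrix.mul_apply, Matrix.transpose_apply, Matrix.add_apply, Matrix.smul_apply,
      Matrix.one_apply, smul_eq_mul, mul_ite, mul_one, mul_zero] at h
    exact h.symm
  have hA : ∑ k, ∑ i ∈ V1, V k i * V k i = V1.card * lam := by
    rw [Finset.sum_comm]
    simp [hG, hdiag]
  have hB : ∑ k, ∑ i ∈ V1, ∑ j ∈ V1, V k i * V k j =
      ∑ i ∈ V1, ∑ j ∈ V1, Q0 i j + V1.card * lam := by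
    rw [Finset.sum_comm]
    simp_rw [Finset.sum_comm (s := Finset.univ), hG, Finset.sum_add_distrib]
    congr 1
    rw [Finset.sum_congr rfl (g := fun _ => lam) (fun i hi => by simp [hi])]
    simp
  have hC : ∑ i, ∑ j, ctilde i * Q0 i j * ctilde j = ∑ i ∈ V1, ∑ j ∈ V1, Q0 i j := by
    simp [hctilde, ← Finset.sum_filter]
  rw [hC, Finset.sum_comm, ← hcard]
  simp_rw [sum_sub_mean_sq V1 _ hK0]
  rw [Finset.sum_sub_distrib, ← Finset.mul_sum, hA, hB]
  field_simp
  ring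
end

section
/- Let Q be a real symmetric n×n matrix and q ∈ ℝ^n. Define Q' = Q − diag(Q) (Q with its diagonal entries set to zero), q0 = −4 Q' 𝟙 − q ∈ ℝ^n, and the (n+1)×(n+1) symmetric matrix Q0 = [[8Q', q0],[q0ᵀ, 0]]. Then, with C = 2·𝟙ᵀ Q' 𝟙 + 2·tr(Q) + qᵀ 𝟙, for every c ∈ {0,1}^n, setting b = 2c − 𝟙 ∈ {−1,1}^n and c̃ = (c,1) ∈ ℝ^{n+1}, one has c̃ᵀ Q0 c̃ = 2 bᵀ Q b − qᵀ b − C; moreover bᵀ 𝟙 = (n mod 2) if and only if Σ_{i=1}^n c_i = ⌊(n+1)/2⌋. Hence maximizing 2 bᵀ Q b − qᵀ b over b ∈ {−1,1}^n with bᵀ 𝟙 = (n mod 2) is equivalent to maximizing c̃ᵀ Q0 c̃ over c ∈ {0,1}^n with Σ_i c_i = ⌊(n+1)/2⌋. -/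
/-!
Since `b i ^ 2 = 1`, the diagonal of `Q` contributes only the constant `tr Q` to `bᵀ Q b`
(`quad_offdiag`). Substituting `b = 2c - 𝟙` into the remaining form `bᵀ Q' b` and using the
symmetry of `Q'` gives `4 cᵀ Q' c - 4 cᵀ Q' 𝟙 + 𝟙ᵀ Q' 𝟙` (`quad_affine`), and the linear part of
this is absorbed in the border `q0` of `Q0` (`quad_bordered`). The constraints match because
`2 ⌊(n+1)/2⌋ = n + n mod 2`. The two objectives thus differ by the constant `C` along the
bijection `c ↦ 2c - 𝟙` of the feasible sets, so they have the same maximizers.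
-/

open Matrix Finset

/-- On sign vectors, deleting the diagonal changes the quadratic form by the trace. -/
lemma quad_offdiag {n : ℕ} (Q Q' : Matrix (Fin n) (Fin n) ℝ)
    (hQ' : ∀ i j, Q' i j = if i = j then 0 else Q i j)
    (b : Fin n → ℝ) (hb : ∀ i, b i * b i = 1) :
    ∑ i, ∑ j, b i * Q i j * b j = (∑ i, ∑ j, b i * Q' i j * b j) + ∑ i, Q i i := by
  rw [← Finset.sum_add_distrib]
  refine Finset.sum_congr rfl fun i _ => ?_
  have h : ∀ j, b i * Q i j * b j = b i * Q' i j * b j + if i = j then Q i i else 0 := by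
    intro j
    rw [hQ']
    split_ifs with hij
    · subst hij
      linear_combination Q i i * hb i
    · ring
  simp [h, Finset.sum_add_distrib]

lemma quad_affine {n : ℕ} (A : Matrix (Fin n) (Fin n) ℝ) (hA : ∀ i j, A i j = A j i)
    (c : Fin n → ℝ) :
    ∑ i, ∑ j, (2 * c i - 1) * A i j * (2 * c j - 1) =
      4 * (∑ i, ∑ j, c i * A i j * c j) - 4 * (∑ i, c i * ∑ j, A i j) + ∑ i, ∑ j, A i j := by
  have hcol : ∑ i, ∑ j, A i j * c j = ∑ i, ∑ j, c i * A i j := by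
    rw [Finset.sum_comm]
    refine Finset.sum_congr rfl fun i _ => Finset.sum_congr rfl fun j _ => ?_
    rw [hA j i, mul_comm]
  have h : ∀ i j, (2 * c i - 1) * A i j * (2 * c j - 1) =
      4 * (c i * A i j * c j) - 2 * (c i * A i j) - 2 * (A i j * c j) + A i j := by
    intro i j
    ring
  simp only [h, Finset.sum_add_distrib, Finset.sum_sub_distrib, ← Finset.mul_sum] at hcol ⊢
  linear_combination -2 * hcol

/-- The quadratic form of the block matrix `[[8A, v], [vᵀ, 0]]` at `(c, 1)`. -/
lemma quad_bordered {n : ℕ} (A : Matrix (Fin n) (Fin n) ℝ) (v : Fin n → ℝ)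
    (M : Matrix (Fin (n + 1)) (Fin (n + 1)) ℝ)
    (hblock : ∀ i j : Fin n, M i.castSucc j.castSucc = 8 * A i j)
    (hcol : ∀ i : Fin n, M i.castSucc (Fin.last n) = v i)
    (hrow : ∀ j : Fin n, M (Fin.last n) j.castSucc = v j)
    (hcorner : M (Fin.last n) (Fin.last n) = 0) (c : Fin n → ℝ) :
    ∑ i, ∑ j, (Fin.snoc c 1 : Fin (n + 1) → ℝ) i * M i j *
        (Fin.snoc c 1 : Fin (n + 1) → ℝ) j =
      8 * (∑ i, ∑ j, c i * A i j * c j) + 2 * ∑ i, c i * v i := by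
  have h : ∀ i j, c i * (8 * A i j) * c j = 8 * (c i * A i j * c j) := by
    intro i j
    ring
  have hv : ∑ i, v i * c i = ∑ i, c i * v i :=
    Finset.sum_congr rfl fun i _ => mul_comm _ _
  simp only [Fin.sum_univ_castSucc, Fin.snoc_castSucc, Fin.snoc_last, hblock, hcol, hrow,
    hcorner, Finset.sum_add_distrib, h, ← Finset.mul_sum, one_mul, mul_one, hv]
  ring

lemma balance_iff {n : ℕ} (c : Fin n → ℝ) :
    (∑ i, (2 * c i - 1)) = ((n % 2 : ℕ) : ℝ) ↔ (∑ i, c i) = (((n + 1) / 2 : ℕ) : ℝ) := by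
  have hn : 2 * ((n + 1) / 2) = n + n % 2 := by omega
  have hn' : 2 * (((n + 1) / 2 : ℕ) : ℝ) = n + ((n % 2 : ℕ) : ℝ) := by exact_mod_cast hn
  have hs : ∑ i, (2 * c i - 1) = 2 * (∑ i, c i) - n := by
    simp [Finset.sum_sub_distrib, ← Finset.mul_sum]
  rw [hs]
  constructor <;> intro h <;> linarith

/-- Transformation of the BQP over {−1,1}^n with a balance constraint into a BQP over
{0,1}^n without a linear term: c̃ᵀ Q0 c̃ = 2 bᵀ Q b − qᵀ b − C for b = 2c − 𝟙, the
constraint bᵀ𝟙 = n mod 2 corresponds to Σ c_i = ⌊(n+1)/2⌋, and hence the two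
constrained maximization problems are equivalent. -/
theorem bqp_transform (n : ℕ)
    (Q : Matrix (Fin n) (Fin n) ℝ) (hQsymm : Q.IsSymm) (q : Fin n → ℝ)
    (Q' : Matrix (Fin n) (Fin n) ℝ)
    (hQ' : ∀ i j, Q' i j = if i = j then 0 else Q i j)
    (q0 : Fin n → ℝ) (hq0 : ∀ i, q0 i = -4 * (∑ j, Q' i j) - q i)
    (Q0 : Matrix (Fin (n + 1)) (Fin (n + 1)) ℝ)
    (hQ0block : ∀ i j : Fin n, Q0 i.castSucc j.castSucc = 8 * Q' i j)
    (hQ0col : ∀ i : Fin n, Q0 i.castSucc (Fin.last n) = q0 i)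
    (hQ0row : ∀ j : Fin n, Q0 (Fin.last n) j.castSucc = q0 j)
    (hQ0corner : Q0 (Fin.last n) (Fin.last n) = 0)
    (C : ℝ)
    (hC : C = 2 * (∑ i, ∑ j, Q' i j) + 2 * (∑ i, Q i i) + ∑ i, q i) :
    (∀ c : Fin n → ℝ, (∀ i, c i = 0 ∨ c i = 1) →
      ((∑ i, ∑ j, (Fin.snoc c 1 : Fin (n + 1) → ℝ) i * Q0 i j *
          (Fin.snoc c 1 : Fin (n + 1) → ℝ) j) =
        2 * (∑ i, ∑ j, (2 * c i - 1) * Q i j * (2 * c j - 1)) -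
          (∑ i, q i * (2 * c i - 1)) - C) ∧
      ((∑ i, (2 * c i - 1)) = ((n % 2 : ℕ) : ℝ) ↔
        (∑ i, c i) = (((n + 1) / 2 : ℕ) : ℝ))) ∧
    (∀ c : Fin n → ℝ, (∀ i, c i = 0 ∨ c i = 1) →
      (∑ i, c i) = (((n + 1) / 2 : ℕ) : ℝ) →
      ((∀ b : Fin n → ℝ, (∀ i, b i = 1 ∨ b i = -1) →
          (∑ i, b i) = ((n % 2 : ℕ) : ℝ) →
          2 * (∑ i, ∑ j, b i * Q i j * b j) - (∑ i, q i * b i) ≤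
            2 * (∑ i, ∑ j, (2 * c i - 1) * Q i j * (2 * c j - 1)) -
              (∑ i, q i * (2 * c i - 1))) ↔
        (∀ c' : Fin n → ℝ, (∀ i, c' i = 0 ∨ c' i = 1) →
          (∑ i, c' i) = (((n + 1) / 2 : ℕ) : ℝ) →
          (∑ i, ∑ j, (Fin.snoc c' 1 : Fin (n + 1) → ℝ) i * Q0 i j *
              (Fin.snoc c' 1 : Fin (n + 1) → ℝ) j) ≤
            (∑ i, ∑ j, (Fin.snoc c 1 : Fin (n + 1) → ℝ) i * Q0 i j *
              (Fin.snoc c 1 : Fin (n + 1) → ℝ) j)))) := by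
  have hQ'symm : ∀ i j, Q' i j = Q' j i := by
    intro i j
    rw [hQ', hQ', hQsymm.apply i j]
    simp only [eq_comm]
  have obj : ∀ c : Fin n → ℝ, (∀ i, c i = 0 ∨ c i = 1) →
      (∑ i, ∑ j, (Fin.snoc c 1 : Fin (n + 1) → ℝ) i * Q0 i j *
          (Fin.snoc c 1 : Fin (n + 1) → ℝ) j) =
        2 * (∑ i, ∑ j, (2 * c i - 1) * Q i j * (2 * c j - 1)) -
          (∑ i, q i * (2 * c i - 1)) - C := by
    intro c hc
    have hb : ∀ i, (2 * c i - 1) * (2 * c i - 1) = 1 := by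
      intro i
      rcases hc i with h | h <;> rw [h] <;> norm_num
    have hlin : ∑ i, c i * q0 i = -4 * (∑ i, c i * ∑ j, Q' i j) - ∑ i, q i * c i := by
      rw [Finset.mul_sum, ← Finset.sum_sub_distrib]
      refine Finset.sum_congr rfl fun i _ => ?_
      rw [hq0]
      ring
    have hq : ∑ i, q i * (2 * c i - 1) = 2 * (∑ i, q i * c i) - ∑ i, q i := by
      rw [Finset.mul_sum, ← Finset.sum_sub_distrib]
      refine Finset.sum_congr rfl fun i _ => ?_
      ring
    rw [quad_bordered Q' q0 Q0 hQ0block hQ0col hQ0row hQ0corner,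
      quad_offdiag Q Q' hQ' (fun i => 2 * c i - 1) hb, quad_affine Q' hQ'symm, hlin, hq, hC]
    ring
  refine ⟨fun c hc => ⟨obj c hc, balance_iff c⟩, fun c hc _ => ⟨fun hmax c' hc' hs' => ?_,
    fun hmax b hb hs => ?_⟩⟩
  · rw [obj c hc, obj c' hc']
    have hb' : ∀ i, 2 * c' i - 1 = 1 ∨ 2 * c' i - 1 = -1 := by
      intro i
      rcases hc' i with h | h <;> rw [h] <;> norm_num
    have := hmax (fun i => 2 * c' i - 1) hb' ((balance_iff c').2 hs')
    linarith
  -- The preimage of `b` under `c ↦ 2c - 𝟙` is `(b + 𝟙) / 2`.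
  · obtain ⟨c', rfl⟩ : ∃ c' : Fin n → ℝ, b = fun i => 2 * c' i - 1 :=
      ⟨fun i => (b i + 1) / 2, funext fun i => by ring⟩
    have hc' : ∀ i, c' i = 0 ∨ c' i = 1 := by
      intro i
      rcases hb i with h | h
      · right
        linarith
      · left
        linarith
    have := hmax c' hc' ((balance_iff c').1 hs)
    rw [obj c hc, obj c' hc'] at this
    linarith
end
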